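/- arXiv:2402.07666 — 2 statements merged into one kernel-verified Lean document; each statement's English description precedes it below -/
import Mathlib

section
/- Two d-DOPs P and P' intersect (i.e., P ∩ P' ≠ ∅ as open sets) if and only if p_i(P) > −p_{i+d}(P') for every i ∈ {1,…,2d}. -/
open scoped Classical

noncomputable section

/-- A point of the Euclidean plane. -/
abbrev Pt : Type := ℝ × ℝ

/-- Dot product in the plane. -/
def dot2 (a b : Pt) : ℝ := a.1 * b.1 + a.2 * b.2

/-- Clockwise orthogonal rotation `v^⊥` of a vector. -/
def perp2 (w : Pt) : Pt := (w.2, -w.1)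

/-- Cross product (determinant) of two plane vectors. -/
def cross2 (a b : Pt) : ℝ := a.1 * b.2 - a.2 * b.1

/-- The hypotheses on the family of direction-defining vectors `v₁, …, v_d`
(extended to all integer indices by `v_{i+d} = -v_i`, hence `2d`-periodicity):
`d ≥ 2`, `v 1 = (0,1)`, pairwise linear independence of `v₁, …, v_d`,
`v₂, …, v_d` have negative first coordinate, and `v₂, …, v_d`
are ordered by strictly decreasing slope. -/
def DirOK (d : ℕ) (v : ℤ → Pt) : Prop :=
  2 ≤ d ∧
  v 1 = ((0 : ℝ), (1 : ℝ)) ∧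
  (∀ i : ℤ, v (i + (d : ℤ)) = -v i) ∧
  (∀ i j : ℤ, 1 ≤ i → i < j → j ≤ (d : ℤ) → cross2 (v i) (v j) ≠ 0) ∧
  (∀ i : ℤ, 2 ≤ i → i ≤ (d : ℤ) → (v i).1 < 0) ∧
  (∀ i j : ℤ, 2 ≤ i → i < j → j ≤ (d : ℤ) → (v j).2 / (v j).1 < (v i).2 / (v i).1)

/-- The open polygon `P = {x : ⟨x, v_i^⊥⟩ < p_i for all i ∈ {1,…,2d}}`. -/
def DOPset (d : ℕ) (v : ℤ → Pt) (p : ℤ → ℝ) : Set Pt :=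
  {x : Pt | ∀ i ∈ Finset.Icc (1 : ℤ) (2 * (d : ℤ)), dot2 x (perp2 (v i)) < p i}

/-- The edge `e_i(P) = cl(P) ∩ {x : ⟨x, v_i^⊥⟩ = p_i}`. -/
def edgeOf (d : ℕ) (v : ℤ → Pt) (p : ℤ → ℝ) (i : ℤ) : Set Pt :=
  closure (DOPset d v p) ∩ {x : Pt | dot2 x (perp2 (v i)) = p i}

/-- `p` (a `2d`-periodic family of offsets) defines a `d`-DOP: the corresponding open
set is nonempty and bounded, and every constraint is tight (each edge is nonempty). -/
def IsDOP (d : ℕ) (v : ℤ → Pt) (p : ℤ → ℝ) : Prop :=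
  (DOPset d v p).Nonempty ∧
  Bornology.IsBounded (DOPset d v p) ∧
  (∀ i : ℤ, p (i + 2 * (d : ℤ)) = p i) ∧
  ∀ i ∈ Finset.Icc (1 : ℤ) (2 * (d : ℤ)), (edgeOf d v p i).Nonempty

/-- `te` and `he` are the tail and the head of the (possibly degenerate) segment `e`,
oriented along `v i`:  `e = [te, he]` and `he - te` is a nonnegative multiple of `v i`. -/
def IsTH (v : ℤ → Pt) (i : ℤ) (e : Set Pt) (te he : Pt) : Prop :=
  e = segment ℝ te he ∧ ∃ c : ℝ, 0 ≤ c ∧ he - te = c • v i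

/-- The pair (tail, head) of the edge `e_i(P)` (chosen by the characterizing property). -/
def THpair (d : ℕ) (v : ℤ → Pt) (p : ℤ → ℝ) (i : ℤ) : Pt × Pt :=
  if h : ∃ th : Pt × Pt, IsTH v i (edgeOf d v p i) th.1 th.2 then h.choose
  else (0 : Pt × Pt)

/-- The tail `t(e_i(P))` of the edge `e_i(P)`. -/
def tlPt (d : ℕ) (v : ℤ → Pt) (p : ℤ → ℝ) (i : ℤ) : Pt := (THpair d v p i).1

/-- The head `h(e_i(P))` of the edge `e_i(P)`. -/
def hdPt (d : ℕ) (v : ℤ → Pt) (p : ℤ → ℝ) (i : ℤ) : Pt := (THpair d v p i).2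

/-- The relative interior of the edge `e_i(P)`: the segment minus its two endpoints. -/
def relintE (d : ℕ) (v : ℤ → Pt) (p : ℤ → ℝ) (i : ℤ) : Set Pt :=
  segment ℝ (tlPt d v p i) (hdPt d v p i) \ {tlPt d v p i, hdPt d v p i}

/-- A family of `d`-DOPs is independent: members are pairwise distinct (as sets)
and no two of them meet as open sets. -/
def Indep (d : ℕ) (v : ℤ → Pt) (OPT : Set (ℤ → ℝ)) : Prop :=
  ∀ p ∈ OPT, ∀ q ∈ OPT, p ≠ q →
    DOPset d v p ≠ DOPset d v q ∧ DOPset d v p ∩ DOPset d v q = ∅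

/-- `P` sees `P'` with respect to the charging option `(v_i, a)`, where the Boolean
`a = true` stands for the option `h` (head) and `a = false` for `t` (tail):
the edge `e = e_i(P)` is non-degenerate and `(¬a)(e') ∈ relint(e) ∪ {a(e)}`
where `e' = e_{i+d}(P')`. -/
def SeesOpt (d : ℕ) (v : ℤ → Pt) (p p' : ℤ → ℝ) (i : ℤ) (a : Bool) : Prop :=
  tlPt d v p i ≠ hdPt d v p i ∧
  (if a then tlPt d v p' (i + (d : ℤ)) else hdPt d v p' (i + (d : ℤ))) ∈
    relintE d v p i ∪ {if a then hdPt d v p i else tlPt d v p i}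

/-- `P ∈ OPT` is accountable with respect to the charging option `(v_i, a)`. -/
def Accountable (d : ℕ) (v : ℤ → Pt) (OPT : Set (ℤ → ℝ)) (p : ℤ → ℝ) (i : ℤ)
    (a : Bool) : Prop :=
  ∃ p' ∈ OPT, SeesOpt d v p p' i a

/-- Condition (E4): for every `P ∈ OPT` and every non-degenerate edge `e` of `P`,
`relint(e)` meets the boundary of another polygon of `OPT` or the boundary of `C*`. -/
def E4cond (d : ℕ) (v : ℤ → Pt) (OPT : Set (ℤ → ℝ)) (Cstar : Set Pt) : Prop :=
  ∀ p ∈ OPT, ∀ i ∈ Finset.Icc (1 : ℤ) (2 * (d : ℤ)),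
    tlPt d v p i ≠ hdPt d v p i →
    (∃ q ∈ OPT, DOPset d v q ≠ DOPset d v p ∧
      (relintE d v p i ∩ frontier (DOPset d v q)).Nonempty) ∨
    (relintE d v p i ∩ frontier Cstar).Nonempty

/-- A (closed) parallelogram in the plane. -/
def IsParallelogram (C : Set Pt) : Prop :=
  ∃ a u w : Pt, cross2 u w ≠ 0 ∧
    C = (fun st : ℝ × ℝ => a + st.1 • u + st.2 • w) ''
      {st : ℝ × ℝ | st.1 ∈ Set.Icc (0 : ℝ) 1 ∧ st.2 ∈ Set.Icc (0 : ℝ) 1}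

/-- `P` is a corner polygon in `C*`: all of its edges except exactly one are
contained in `∂C*`. -/
def CornerPoly (d : ℕ) (v : ℤ → Pt) (p : ℤ → ℝ) (Cstar : Set Pt) : Prop :=
  ∃ i ∈ Finset.Icc (1 : ℤ) (2 * (d : ℤ)),
    ¬ edgeOf d v p i ⊆ frontier Cstar ∧
    ∀ j ∈ Finset.Icc (1 : ℤ) (2 * (d : ℤ)), j ≠ i → edgeOf d v p j ⊆ frontier Cstar

/-!
Both polygons are finite intersections of open half-planes, so by Helly's theorem it is enough that
any three of these half-planes have a common point. Among three half-planes at most one belongs to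
one of the polygons, say to `P'`; the other two contain `P`, so it suffices that `P` meets every
half-plane of `P'`. For the half-plane with index `i + d`, the inequality `p_i(P) > -p_{i+d}(P')`
puts the edge `e_i(P)`, a nonempty subset of `cl(P)`, in that open half-plane.
-/

section Helly

open Finset Module

variable {ι κ 𝕜 E : Type*}

lemma inter_biInter_nonempty_of_card_le_one {A : Set E} {G : κ → Set E} {t : Finset κ}
    (ht : #t ≤ 1) (hA : A.Nonempty) (hAG : ∀ j ∈ t, (A ∩ G j).Nonempty) :
    (A ∩ ⋂ j ∈ t, G j).Nonempty := by
  obtain ht | ht := Nat.le_one_iff_eq_zero_or_eq_one.mp ht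
  · obtain rfl := card_eq_zero.mp ht
    simpa using hA
  · obtain ⟨j, rfl⟩ := card_eq_one.mp ht
    simpa using hAG

variable [Field 𝕜] [LinearOrder 𝕜] [IsStrictOrderedRing 𝕜] [AddCommGroup E] [Module 𝕜 E]
  [FiniteDimensional 𝕜 E]

theorem biInter_inter_biInter_nonempty_of_finrank_le_two (hE : finrank 𝕜 E ≤ 2)
    {F : ι → Set E} {G : κ → Set E} {s : Finset ι} {t : Finset κ}
    (hF : ∀ i ∈ s, Convex 𝕜 (F i)) (hG : ∀ j ∈ t, Convex 𝕜 (G j))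
    (hF_ne : (⋂ i ∈ s, F i).Nonempty) (hG_ne : (⋂ j ∈ t, G j).Nonempty)
    (hFG : ∀ j ∈ t, ((⋂ i ∈ s, F i) ∩ G j).Nonempty)
    (hGF : ∀ i ∈ s, ((⋂ j ∈ t, G j) ∩ F i).Nonempty) :
    ((⋂ i ∈ s, F i) ∩ ⋂ j ∈ t, G j).Nonempty := by
  have inter_eq (I : Finset (ι ⊕ κ)) :
      ⋂ k ∈ I, Sum.elim F G k = (⋂ i ∈ I.toLeft, F i) ∩ ⋂ j ∈ I.toRight, G j := by
    simp only [Set.iInter_sum, Sum.elim_inl, Sum.elim_inr, mem_toLeft, mem_toRight]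
  suffices (⋂ k ∈ s.disjSum t, Sum.elim F G k).Nonempty by
    simpa only [inter_eq, toLeft_disjSum, toRight_disjSum] using this
  refine Convex.helly_theorem' (𝕜 := 𝕜) ?_ fun I hI hI_card => ?_
  · simpa using ⟨hF, hG⟩
  have hs : I.toLeft ⊆ s := fun i hi => inl_mem_disjSum.mp (hI (mem_toLeft.mp hi))
  have ht : I.toRight ⊆ t := fun j hj => inr_mem_disjSum.mp (hI (mem_toRight.mp hj))
  have h_card : #I.toLeft ≤ 1 ∨ #I.toRight ≤ 1 := by
    have := I.card_toLeft_add_card_toRight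
    omega
  rw [inter_eq]
  obtain hl | hr := h_card
  · rw [Set.inter_comm]
    exact (inter_biInter_nonempty_of_card_le_one hl hG_ne fun i hi => hGF i (hs hi)).mono
      (Set.inter_subset_inter_left _ (Set.biInter_mono ht fun _ _ => subset_rfl))
  · exact (inter_biInter_nonempty_of_card_le_one hr hF_ne fun j hj => hFG j (ht hj)).mono
      (Set.inter_subset_inter_left _ (Set.biInter_mono hs fun _ _ => subset_rfl))

end Helly

section TightHalfSpaces

open Module Set

variable {ι E : Type*} [AddCommGroup E] [Module ℝ E] [TopologicalSpace E] [FiniteDimensional ℝ E]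

theorem biInter_Iio_inter_biInter_Ioi_nonempty_iff (hE : finrank ℝ E ≤ 2) {s : Finset ι}
    {f : ι → StrongDual ℝ E} {a b : ι → ℝ}
    (ha : ∀ i ∈ s, ∃ x ∈ closure (⋂ j ∈ s, f j ⁻¹' Iio (a j)), f i x = a i)
    (hb : ∀ i ∈ s, ∃ x ∈ closure (⋂ j ∈ s, f j ⁻¹' Ioi (b j)), f i x = b i) :
    ((⋂ i ∈ s, f i ⁻¹' Iio (a i)) ∩ ⋂ i ∈ s, f i ⁻¹' Ioi (b i)).Nonempty ↔
      ∀ i ∈ s, b i < a i := by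
  refine ⟨fun ⟨x, hxa, hxb⟩ i hi => ?_, fun hba => ?_⟩
  · exact (mem_iInter₂.mp hxb i hi).trans (mem_iInter₂.mp hxa i hi)
  obtain rfl | ⟨i₀, hi₀⟩ := s.eq_empty_or_nonempty
  · simp
  have below_meets_above (i) (hi : i ∈ s) :
      ((⋂ j ∈ s, f j ⁻¹' Iio (a j)) ∩ f i ⁻¹' Ioi (b i)).Nonempty := by
    obtain ⟨x, hx, hx_eq⟩ := ha i hi
    exact (closure_inter_open_nonempty_iff (isOpen_Ioi.preimage (f i).continuous)).mp
      ⟨x, hx, (hba i hi).trans_eq hx_eq.symm⟩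
  have above_meets_below (i) (hi : i ∈ s) :
      ((⋂ j ∈ s, f j ⁻¹' Ioi (b j)) ∩ f i ⁻¹' Iio (a i)).Nonempty := by
    obtain ⟨x, hx, hx_eq⟩ := hb i hi
    exact (closure_inter_open_nonempty_iff (isOpen_Iio.preimage (f i).continuous)).mp
      ⟨x, hx, hx_eq.trans_lt (hba i hi)⟩
  exact biInter_inter_biInter_nonempty_of_finrank_le_two hE
    (fun i _ => (convex_Iio (a i)).linear_preimage (f i).toLinearMap)
    (fun i _ => (convex_Ioi (b i)).linear_preimage (f i).toLinearMap)
    (below_meets_above i₀ hi₀).left (above_meets_below i₀ hi₀).left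
    below_meets_above above_meets_below

end TightHalfSpaces

section DOP

open Finset Function

lemma forall_mem_Icc_add_iff_of_periodic {R : ℤ → Prop} {n : ℤ} (hR : Periodic R n) (m : ℤ) :
    (∀ i ∈ Icc 1 n, R (i + m)) ↔ ∀ i ∈ Icc 1 n, R i := by
  obtain hn | hn := le_or_gt n 0
  · simp [Icc_eq_empty_of_lt (show n < 1 by omega)]
  have forall_iff {S : ℤ → Prop} (hS : Periodic S n) : (∀ i ∈ Icc 1 n, S i) ↔ ∀ i, S i := by
    refine ⟨fun h i => ?_, fun h i _ => h i⟩
    obtain ⟨j, hj, hij⟩ := hS.exists_mem_Ioc hn i 0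
    exact hij ▸ h j (by simp only [Set.mem_Ioc, mem_Icc] at hj ⊢; omega)
  rw [forall_iff hR, forall_iff (hR.add_const m), (Equiv.addRight m).forall_congr_left]
  simp

/-- The linear functional `⟨·, w^⊥⟩`, whose sublevel sets are the half-planes cutting out a DOP. -/
def perpForm (w : Pt) : StrongDual ℝ Pt :=
  w.2 • ContinuousLinearMap.fst ℝ ℝ ℝ - w.1 • ContinuousLinearMap.snd ℝ ℝ ℝ

lemma perpForm_apply (w x : Pt) : perpForm w x = dot2 x (perp2 w) := by
  simp only [perpForm, dot2, perp2, sub_apply, smul_apply, ContinuousLinearMap.coe_fst',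
    ContinuousLinearMap.coe_snd', smul_eq_mul]
  ring

lemma perpForm_neg (w : Pt) : perpForm (-w) = -perpForm w := by
  refine ContinuousLinearMap.ext fun x => ?_
  simp only [perpForm_apply, neg_apply, dot2, perp2, Prod.fst_neg, Prod.snd_neg]
  ring

variable {d : ℕ} {v : ℤ → Pt} {p q : ℤ → ℝ}

lemma DOPset_eq_biInter_Iio :
    DOPset d v p = ⋂ i ∈ Icc (1 : ℤ) (2 * d), perpForm (v i) ⁻¹' Set.Iio (p i) := by
  ext x
  simp only [DOPset, ← perpForm_apply, Set.mem_ofPred_eq, Set.mem_iInter₂, Set.mem_preimage,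
    Set.mem_Iio]

lemma DOPset_eq_biInter_Ioi (hv : Antiperiodic v d) (hq : Periodic q (2 * d)) :
    DOPset d v q = ⋂ i ∈ Icc (1 : ℤ) (2 * d), perpForm (v i) ⁻¹' Set.Ioi (-q (i + d)) := by
  ext x
  have h_periodic : Periodic (fun i => perpForm (v i) x < q i) (2 * d) := fun i => by
    simp only [hv.periodic_two_mul i, hq i]
  simp only [DOPset_eq_biInter_Iio, Set.mem_iInter₂, Set.mem_preimage, Set.mem_Iio, Set.mem_Ioi]
  rw [← forall_mem_Icc_add_iff_of_periodic h_periodic d]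
  simp only [hv _, perpForm_neg, neg_apply, neg_lt]

lemma edgeOf_nonempty_iff {i : ℤ} :
    (edgeOf d v p i).Nonempty ↔ ∃ x ∈ closure (DOPset d v p), perpForm (v i) x = p i := by
  simp only [edgeOf, perpForm_apply, Set.Nonempty, Set.mem_inter_iff, Set.mem_ofPred_eq]

lemma edgeOf_add_nonempty_iff (hv : Antiperiodic v d) {i : ℤ} :
    (edgeOf d v q (i + d)).Nonempty ↔
      ∃ x ∈ closure (DOPset d v q), perpForm (v i) x = -q (i + d) := by
  simp only [edgeOf_nonempty_iff, hv i, perpForm_neg, neg_apply, neg_eq_iff_eq_neg]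

lemma edgeOf_periodic (hv : Antiperiodic v d) (hq : Periodic q (2 * d)) :
    Periodic (edgeOf d v q) (2 * d) := fun i => by
  simp only [edgeOf, hv.periodic_two_mul i, hq i]

theorem stmt0_general (hv : Antiperiodic v d) (hq_periodic : Periodic q (2 * d))
    (hp : ∀ i ∈ Icc (1 : ℤ) (2 * d), (edgeOf d v p i).Nonempty)
    (hq : ∀ i ∈ Icc (1 : ℤ) (2 * d), (edgeOf d v q i).Nonempty) :
    (DOPset d v p ∩ DOPset d v q).Nonempty ↔
      ∀ i ∈ Icc (1 : ℤ) (2 * d), -q (i + d) < p i := by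
  have hq_opposite : ∀ i ∈ Icc (1 : ℤ) (2 * d), (edgeOf d v q (i + d)).Nonempty :=
    (forall_mem_Icc_add_iff_of_periodic
      ((edgeOf_periodic hv hq_periodic).comp Set.Nonempty) d).mpr hq
  simp only [edgeOf_add_nonempty_iff hv] at hq_opposite
  simp only [edgeOf_nonempty_iff] at hp
  rw [DOPset_eq_biInter_Iio] at hp ⊢
  rw [DOPset_eq_biInter_Ioi hv hq_periodic] at hq_opposite ⊢
  exact biInter_Iio_inter_biInter_Ioi_nonempty_iff (by simp) hp hq_opposite

end DOP

/-- Two `d`-DOPs `P` and `P'` intersect (as open sets) if and only if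
`p_i(P) > -p_{i+d}(P')` for every `i ∈ {1,…,2d}`. -/
theorem stmt0 (d : ℕ) (v : ℤ → Pt) (hv : DirOK d v) (p q : ℤ → ℝ)
    (hp : IsDOP d v p) (hq : IsDOP d v q) :
    (DOPset d v p ∩ DOPset d v q).Nonempty ↔
      ∀ i ∈ Finset.Icc (1 : ℤ) (2 * (d : ℤ)), -q (i + (d : ℤ)) < p i :=
  stmt0_general hv.2.2.1 hq.2.2.1 hp.2.2.2 hq.2.2.2
end
end

section
/- Let OPT be an independent family of d-DOPs and let (v_i, a) with i ∈ {1,…,2d} and a ∈ {t, h} be a charging option. If P₁ ∈ OPT and P₂ ∈ OPT both see the same polygon P' ∈ OPT with respect to (v_i, a), then P₁ = P₂. -/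
open scoped Classical

noncomputable section

/-!
Two disjoint open convex sets lying on the same side of a line cannot share a nondegenerate segment
of that line in their boundaries: just off the midpoint of the segment, on the side of the sets,
every point belongs to both. Two polygons seeing the same point with respect to `(v_i, a)` have
edges `e_i` that both contain a segment starting at that point and running away from the
endpoint `a`, so their edges share a segment while their interiors lie on the same side of it.
-/

open Filter Topology

section ConvexSets

variable {E : Type*} [AddCommGroup E] [Module ℝ E]

lemma add_smul_mem_segment_sub_add {m w : E} {c : ℝ} (hc : |c| ≤ 1) :
    m + c • w ∈ segment ℝ (m - w) (m + w) := by
  obtain ⟨hc₁, hc₂⟩ := abs_le.1 hc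
  exact ⟨(1 - c) / 2, (1 + c) / 2, by linarith, by linarith, by ring, by module⟩

lemma exists_smul_eq_of_apply_eq_zero (hE : Module.finrank ℝ E = 2) {f : Module.Dual ℝ E}
    (hf : f ≠ 0) {u w : E} (hw : w ≠ 0) (hfw : f w = 0) (hfu : f u = 0) :
    ∃ c : ℝ, c • w = u := by
  have : FiniteDimensional ℝ E := .of_finrank_pos (by omega)
  have hker : Module.finrank ℝ (LinearMap.ker f) = 1 := by
    have := Module.Dual.finrank_ker_add_one_of_ne_zero hf
    omega
  have hw' : (⟨w, hfw⟩ : LinearMap.ker f) ≠ 0 := fun h ↦ hw (congrArg Subtype.val h)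
  obtain ⟨c, hc⟩ := (finrank_eq_one_iff_of_nonzero' _ hw').1 hker ⟨u, hfu⟩
  exact ⟨c, congrArg Subtype.val hc⟩

lemma exists_smul_add_smul_eq_of_apply_neg (hE : Module.finrank ℝ E = 2) {f : Module.Dual ℝ E}
    {w x y : E} (hw : w ≠ 0) (hfw : f w = 0) (hfx : f x < 0) (hfy : f y < 0) :
    ∃ α β : ℝ, 0 < β ∧ α • w + β • x = y := by
  have hf : f ≠ 0 := by
    rintro rfl
    exact hfx.ne rfl
  have hdiff : f (y - (f y / f x) • x) = 0 := by
    rw [map_sub, map_smul, smul_eq_mul, div_mul_cancel₀ _ hfx.ne, sub_self]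
  obtain ⟨α, hα⟩ := exists_smul_eq_of_apply_eq_zero hE hf hw hfw hdiff
  exact ⟨α, f y / f x, div_pos_of_neg_of_neg hfy hfx, by rw [hα, sub_add_cancel]⟩

variable [TopologicalSpace E] [IsTopologicalAddGroup E] [ContinuousSMul ℝ E]

lemma eventually_add_smul_mem_interior {s : Set E} (hs : Convex ℝ s) {m w n : E} {α β : ℝ}
    (hβ : 0 < β) (hsub : m - w ∈ closure s) (hadd : m + w ∈ closure s)
    (hx : m + α • w + β • n ∈ interior s) :
    ∀ᶠ ε : ℝ in 𝓝[>] 0, m + ε • n ∈ interior s := by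
  -- `m + ε • n` lies strictly between `m + c ε • w` and the interior point `m + α • w + β • n`.
  let c : ℝ → ℝ := fun ε ↦ -(ε * α) / (β - ε)
  have hc : Tendsto c (𝓝 0) (𝓝 0) := by
    have : ContinuousAt c 0 := by
      refine ContinuousAt.div (by fun_prop) (by fun_prop) ?_
      simpa only [sub_zero] using hβ.ne'
    simpa only [c, ContinuousAt, zero_mul, neg_zero, zero_div] using this
  have hc_le : ∀ᶠ ε in 𝓝[>] 0, |c ε| < 1 :=
    (hc.abs.eventually_lt_const (by norm_num)).filter_mono nhdsWithin_le_nhds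
  filter_upwards [hc_le, Ioo_mem_nhdsGT hβ] with ε hcε ⟨hε, hεβ⟩
  have hbase : m + c ε • w ∈ closure s :=
    hs.closure.segment_subset hsub hadd (add_smul_mem_segment_sub_add hcε.le)
  refine hs.openSegment_closure_interior_subset_interior hbase hx
    ⟨1 - ε / β, ε / β, sub_pos.2 ((div_lt_one hβ).2 hεβ), by positivity, by ring, ?_⟩
  have hβε : β - ε ≠ 0 := (sub_pos.2 hεβ).ne'
  match_scalars
  · ring
  · simp only [c]
    field_simp
    ring
  · field_simp

lemma inter_nonempty_of_mem_closure {s t : Set E} (hs : Convex ℝ s) (ht : Convex ℝ t)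
    (hso : IsOpen s) (hto : IsOpen t) {m w n : E} {α β : ℝ} (hβ : 0 < β)
    (hsub : m - w ∈ closure s ∩ closure t) (hadd : m + w ∈ closure s ∩ closure t)
    (hms : m + n ∈ s) (hmt : m + α • w + β • n ∈ t) : (s ∩ t).Nonempty := by
  have hs_near : ∀ᶠ ε : ℝ in 𝓝[>] 0, m + ε • n ∈ interior s :=
    eventually_add_smul_mem_interior hs (α := 0) one_pos hsub.1 hadd.1
      (by simpa only [zero_smul, add_zero, one_smul, hso.interior_eq] using hms)
  have ht_near : ∀ᶠ ε : ℝ in 𝓝[>] 0, m + ε • n ∈ interior t :=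
    eventually_add_smul_mem_interior ht hβ hsub.2 hadd.2 (by rwa [hto.interior_eq])
  obtain ⟨ε, hεs, hεt⟩ := (hs_near.and ht_near).exists
  exact ⟨m + ε • n, interior_subset hεs, interior_subset hεt⟩

theorem closure_inter_closure_inter_hyperplane_subsingleton (hE : Module.finrank ℝ E = 2)
    {s t : Set E} (hs : Convex ℝ s) (ht : Convex ℝ t) (hso : IsOpen s) (hto : IsOpen t)
    (hst : Disjoint s t) {f : Module.Dual ℝ E} {c : ℝ}
    (hsf : ∀ x ∈ s, f x < c) (htf : ∀ x ∈ t, f x < c) :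
    {y ∈ closure s ∩ closure t | f y = c}.Subsingleton := by
  rintro y ⟨hy, hfy⟩ z ⟨hz, hfz⟩
  by_contra hyz
  obtain ⟨x₁, hx₁⟩ := closure_nonempty_iff.1 ⟨y, hy.1⟩
  obtain ⟨x₂, hx₂⟩ := closure_nonempty_iff.1 ⟨y, hy.2⟩
  obtain ⟨m, w, rfl, rfl⟩ : ∃ m w, y = m - w ∧ z = m + w :=
    ⟨(1 / 2 : ℝ) • (y + z), (1 / 2 : ℝ) • (z - y), by module, by module⟩
  have hw : w ≠ 0 := by
    rintro rfl
    exact hyz (by rw [sub_zero, add_zero])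
  rw [map_sub] at hfy
  rw [map_add] at hfz
  have hfw : f w = 0 := by linarith
  have hfm : f m = c := by linarith
  obtain ⟨α, β, hβ, hαβ⟩ := exists_smul_add_smul_eq_of_apply_neg hE hw hfw
    (show f (x₁ - m) < 0 by rw [map_sub, hfm]; exact sub_neg.2 (hsf x₁ hx₁))
    (show f (x₂ - m) < 0 by rw [map_sub, hfm]; exact sub_neg.2 (htf x₂ hx₂))
  refine Set.not_disjoint_iff_nonempty_inter.2 ?_ hst
  refine inter_nonempty_of_mem_closure hs ht hso hto hβ hy hz (n := x₁ - m) (α := α) ?_ ?_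
  · rwa [add_sub_cancel]
  · rwa [add_assoc, hαβ, add_sub_cancel]

end ConvexSets

section Polygons

variable {d : ℕ} {v : ℤ → Pt} {p q : ℤ → ℝ} {i : ℤ} {a : Bool} {z : Pt}

/-- The linear functional `x ↦ ⟨x, w^⊥⟩`, whose level lines are the lines parallel to `w`. -/
def dotPerp (w : Pt) : Pt →L[ℝ] ℝ :=
  w.2 • ContinuousLinearMap.fst ℝ ℝ ℝ - w.1 • ContinuousLinearMap.snd ℝ ℝ ℝ

lemma dotPerp_apply (w x : Pt) : dotPerp w x = dot2 x (perp2 w) := by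
  simp only [dotPerp, dot2, perp2, sub_apply, smul_apply, ContinuousLinearMap.coe_fst',
    ContinuousLinearMap.coe_snd', smul_eq_mul]
  ring

lemma DOPset_eq_iInter (d : ℕ) (v : ℤ → Pt) (p : ℤ → ℝ) :
    DOPset d v p = ⋂ i ∈ Finset.Icc (1 : ℤ) (2 * d), {x | dotPerp (v i) x < p i} := by
  ext x
  simp [DOPset, dotPerp_apply]

lemma isOpen_DOPset (d : ℕ) (v : ℤ → Pt) (p : ℤ → ℝ) : IsOpen (DOPset d v p) := by
  rw [DOPset_eq_iInter]
  exact isOpen_biInter_finset fun i _ ↦ isOpen_lt (dotPerp (v i)).continuous continuous_const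

lemma convex_DOPset (d : ℕ) (v : ℤ → Pt) (p : ℤ → ℝ) : Convex ℝ (DOPset d v p) := by
  rw [DOPset_eq_iInter]
  exact convex_iInter₂ fun i _ ↦ convex_halfSpace_lt (dotPerp (v i)).isLinear (p i)

theorem edgeOf_inter_edgeOf_subsingleton (hi : i ∈ Finset.Icc (1 : ℤ) (2 * d))
    (hpq : Disjoint (DOPset d v p) (DOPset d v q)) :
    (edgeOf d v p i ∩ edgeOf d v q i).Subsingleton := by
  rintro x ⟨⟨hxp, hx⟩, hxq, hx'⟩ y ⟨⟨hyp, hy⟩, hyq, -⟩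
  have hpq_eq : p i = q i := hx.symm.trans hx'
  have hlt {r : ℤ → ℝ} (hr : r i = p i) : ∀ x ∈ DOPset d v r, dotPerp (v i) x < p i :=
    fun x hx ↦ by simpa only [dotPerp_apply, hr] using hx i hi
  exact closure_inter_closure_inter_hyperplane_subsingleton (f := (dotPerp (v i)).toLinearMap)
    (by simp) (convex_DOPset d v p) (convex_DOPset d v q) (isOpen_DOPset d v p)
    (isOpen_DOPset d v q) hpq (hlt rfl) (hlt hpq_eq.symm)
    ⟨⟨hxp, hxq⟩, (dotPerp_apply _ _).trans hx⟩ ⟨⟨hyp, hyq⟩, (dotPerp_apply _ _).trans hy⟩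

/-- The endpoint `a(e_i(P))` of the edge `e_i(P)`, where `true` stands for the head and `false`
for the tail. -/
def endPt (d : ℕ) (v : ℤ → Pt) (p : ℤ → ℝ) (i : ℤ) (a : Bool) : Pt :=
  if a then hdPt d v p i else tlPt d v p i

/-- The direction of an edge `e_i(P)` as seen from its endpoint `a`: `v_i` from the tail and
`-v_i` from the head. -/
def dirFrom (v : ℤ → Pt) (i : ℤ) (a : Bool) : Pt := if a then -v i else v i

/-- `P` sees the point `z` with respect to `(v_i, a)`: its edge `e_i(P)` is non-degenerate and
`z ∈ relint(e_i(P)) ∪ {a(e_i(P))}`. Seeing `P'` means seeing the endpoint `¬a` of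
`e_{i+d}(P')`. -/
def SeesPoint (d : ℕ) (v : ℤ → Pt) (p : ℤ → ℝ) (i : ℤ) (a : Bool) (z : Pt) : Prop :=
  tlPt d v p i ≠ hdPt d v p i ∧ z ∈ relintE d v p i ∪ {endPt d v p i a}

lemma isTH_edgeOf (h : tlPt d v p i ≠ hdPt d v p i) :
    IsTH v i (edgeOf d v p i) (tlPt d v p i) (hdPt d v p i) := by
  unfold tlPt hdPt THpair at *
  split_ifs at h ⊢ with hex
  · exact hex.choose_spec
  · exact absurd rfl h

lemma edgeOf_eq_segment_endPt (h : tlPt d v p i ≠ hdPt d v p i) (a : Bool) :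
    edgeOf d v p i = segment ℝ (endPt d v p i a) (endPt d v p i !a) := by
  cases a
  · exact (isTH_edgeOf h).1
  · exact (isTH_edgeOf h).1.trans (segment_symm ..)

lemma exists_endPt_not_sub_endPt_eq_smul (h : tlPt d v p i ≠ hdPt d v p i) (a : Bool) :
    ∃ c : ℝ, 0 ≤ c ∧ endPt d v p i (!a) - endPt d v p i a = c • dirFrom v i a := by
  obtain ⟨c, hc, hth⟩ := (isTH_edgeOf h).2
  refine ⟨c, hc, ?_⟩
  cases a
  · exact hth
  · change tlPt d v p i - hdPt d v p i = c • -v i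
    rw [smul_neg, ← hth, neg_sub]

lemma SeesPoint.mem_edgeOf (h : SeesPoint d v p i a z) : z ∈ edgeOf d v p i := by
  rcases h.2 with hz | rfl
  · exact (isTH_edgeOf h.1).1 ▸ hz.1
  · rw [edgeOf_eq_segment_endPt h.1 a]
    exact left_mem_segment ..

lemma SeesPoint.ne_endPt_not (h : SeesPoint d v p i a z) : z ≠ endPt d v p i (!a) := by
  obtain ⟨hne, ⟨-, hz⟩ | rfl⟩ := h
  · rintro rfl
    cases a
    · exact hz (.inr rfl)
    · exact hz (.inl rfl)
  · cases a
    · exact hne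
    · exact hne.symm

lemma SeesPoint.exists_smul_eq_endPt_not (h : SeesPoint d v p i a z) :
    ∃ r : ℝ, 0 < r ∧ z + r • dirFrom v i a = endPt d v p i (!a) := by
  obtain ⟨c, hc, hends⟩ := exists_endPt_not_sub_endPt_eq_smul h.1 a
  have hz := h.mem_edgeOf
  rw [edgeOf_eq_segment_endPt h.1 a, segment_symm, segment_eq_image'] at hz
  obtain ⟨θ, ⟨hθ, -⟩, hzθ⟩ := hz
  have hr : z + (θ * c) • dirFrom v i a = endPt d v p i (!a) := by
    rw [← hzθ, mul_smul, ← hends]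
    module
  refine ⟨θ * c, (mul_nonneg hθ hc).lt_of_ne fun h0 ↦ h.ne_endPt_not ?_, hr⟩
  rw [← hr, ← h0, zero_smul, add_zero]

lemma SeesPoint.dirFrom_ne_zero (h : SeesPoint d v p i a z) : dirFrom v i a ≠ 0 := by
  intro h0
  obtain ⟨r, -, hr⟩ := h.exists_smul_eq_endPt_not
  exact h.ne_endPt_not (by rw [← hr, h0, smul_zero, add_zero])

lemma SeesPoint.exists_forall_add_smul_mem_edgeOf (h : SeesPoint d v p i a z) :
    ∃ r : ℝ, 0 < r ∧ ∀ t ∈ Set.Icc 0 r, z + t • dirFrom v i a ∈ edgeOf d v p i := by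
  obtain ⟨r, hr, hend⟩ := h.exists_smul_eq_endPt_not
  refine ⟨r, hr, fun t ht ↦ ?_⟩
  have hconv : Convex ℝ (edgeOf d v p i) := by
    rw [edgeOf_eq_segment_endPt h.1 a]
    exact convex_segment ..
  have hfar : z + r • dirFrom v i a ∈ edgeOf d v p i := by
    rw [hend, edgeOf_eq_segment_endPt h.1 a]
    exact right_mem_segment ..
  have ht' := hconv.add_smul_mem h.mem_edgeOf hfar
    ⟨div_nonneg ht.1 hr.le, (div_le_one hr).2 ht.2⟩
  rwa [smul_smul, div_mul_cancel₀ _ hr.ne'] at ht'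

theorem SeesPoint.not_disjoint (hi : i ∈ Finset.Icc (1 : ℤ) (2 * d))
    (hp : SeesPoint d v p i a z) (hq : SeesPoint d v q i a z) :
    ¬ Disjoint (DOPset d v p) (DOPset d v q) := by
  intro hpq
  obtain ⟨r, hr, hpr⟩ := hp.exists_forall_add_smul_mem_edgeOf
  obtain ⟨s, hs, hqs⟩ := hq.exists_forall_add_smul_mem_edgeOf
  have ht : 0 < min r s := lt_min hr hs
  have heq : z = z + min r s • dirFrom v i a :=
    edgeOf_inter_edgeOf_subsingleton hi hpq ⟨hp.mem_edgeOf, hq.mem_edgeOf⟩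
      ⟨hpr _ ⟨ht.le, min_le_left r s⟩, hqs _ ⟨ht.le, min_le_right r s⟩⟩
  exact smul_ne_zero ht.ne' hp.dirFrom_ne_zero (left_eq_add.1 heq)

theorem stmt3_general {OPT : Set (ℤ → ℝ)} (hdisj : OPT.PairwiseDisjoint (DOPset d v))
    (hi : i ∈ Finset.Icc (1 : ℤ) (2 * d)) (hp : p ∈ OPT) (hq : q ∈ OPT)
    (hpz : SeesPoint d v p i a z) (hqz : SeesPoint d v q i a z) : p = q :=
  hdisj.elim hp hq (hpz.not_disjoint hi hqz)

end Polygons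

/-- Let `OPT` be an independent family of `d`-DOPs and `(v_i, a)` a
charging option (`a = true` is `h`, `a = false` is `t`). If `P₁, P₂ ∈ OPT` both see
the same `P' ∈ OPT` with respect to `(v_i, a)`, then `P₁ = P₂`. -/
theorem stmt3 (d : ℕ) (v : ℤ → Pt) (hv : DirOK d v) (OPT : Set (ℤ → ℝ))
    (hDOP : ∀ p ∈ OPT, IsDOP d v p) (hind : Indep d v OPT)
    (i : ℤ) (hi : i ∈ Finset.Icc (1 : ℤ) (2 * (d : ℤ))) (a : Bool)
    (p₁ p₂ p' : ℤ → ℝ) (hp₁ : p₁ ∈ OPT) (hp₂ : p₂ ∈ OPT) (hp' : p' ∈ OPT)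
    (hsee₁ : SeesOpt d v p₁ p' i a) (hsee₂ : SeesOpt d v p₂ p' i a) :
    p₁ = p₂ := by
  exact stmt3_general (fun p hp q hq hpq ↦ Set.disjoint_iff_inter_eq_empty.2 (hind p hp q hq hpq).2)
    hi hp₁ hp₂ hsee₁ hsee₂
end
end
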